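/- For every δ > 0 there exists c_δ > 0 such that the following holds: for every triangle T = conv{p,q,r} ⊂ ℝ² with diameter D > 0 and Lebesgue area A > 0, there exists a finite collection of balls D_1,…,D_k covering T, each of diameter at most D, such that Σ_{i=1}^{k} (diam D_i)^{1+δ} ≤ c_δ · D^{1−δ} · A^{δ}. -/

import Mathlib

/-!
Let `D` be the diameter of the triangle. It is attained by a side, say `pq`, and
`h = |det (q - p, r - p)| / D` is the height over that side. The triangle is the affine image of
the reference triangle `conv {0, e₀, e₁}`, so its area is `κ * |det| = κ * D * h`, where `κ` is the
area of the reference triangle (`volume_convexHull_triple`); the value of `κ` is irrelevant.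
In orthonormal coordinates at `p` with first axis along `pq`, the triangle lies in
`[-D, D] × [-h, h]`, and this box is covered by `O(D / h)` balls of diameter `h ≤ D` centred at the
points of a square grid of mesh `h / 2`. Hence
`∑ diam ^ (1 + δ) ≲ (D / h) * h ^ (1 + δ) = D * h ^ δ`, which is a constant multiple of
`D ^ (1 - δ) * (κ * D * h) ^ δ`.
-/

open Matrix MeasureTheory

noncomputable section

abbrev M3 := Matrix (Fin 3) (Fin 3) ℝ
abbrev E3 := EuclideanSpace ℝ (Fin 3)

/-- The Rauzy generators. -/
def A : Fin 3 → M3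
  | 0 => !![1,1,1; 0,1,0; 0,0,1]
  | 1 => !![1,0,0; 1,1,1; 0,0,1]
  | 2 => !![1,0,0; 0,1,0; 1,1,1]

/-- Product of the matrices along a word. -/
def Aw (w : List (Fin 3)) : M3 := (w.map A).prod

/-- Euclidean norm of a vector in `ℝ³`. -/
def enorm3 (v : Fin 3 → ℝ) : ℝ := Real.sqrt (v 0 ^ 2 + v 1 ^ 2 + v 2 ^ 2)

/-- Largest singular value = `ℓ²` operator norm. -/
def sval1 (g : M3) : ℝ := ‖(Matrix.toEuclideanLin g).toContinuousLinearMap‖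

/-- Smallest singular value (for invertible `g`): `σ₃(g) = σ₁(g⁻¹)⁻¹`. -/
def sval3 (g : M3) : ℝ := (sval1 g⁻¹)⁻¹

/-- Middle singular value (for invertible `g`): `σ₂ = |det g|·σ₁(g⁻¹)/σ₁(g)`. -/
def sval2 (g : M3) : ℝ := |g.det| * sval1 g⁻¹ / sval1 g

def basis3 (i : Fin 3) : Fin 3 → ℝ := Pi.single i 1

def omega3 (v : Fin 3 → ℝ) : ℝ := v 0 + v 1 + v 2

def ofE : E3 → (Fin 3 → ℝ) := WithLp.equiv 2 (Fin 3 → ℝ)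
def toE : (Fin 3 → ℝ) → E3 := (WithLp.equiv 2 (Fin 3 → ℝ)).symm

/-- The standard 2-simplex in `ℝ³` (with the Euclidean metric). -/
def simplex : Set E3 := {x | (∀ i, 0 ≤ ofE x i) ∧ omega3 (ofE x) = 1}

/-- The projective action of the word `w` on the simplex. -/
def fmap (w : List (Fin 3)) (x : E3) : E3 :=
  toE ((omega3 ((Aw w) *ᵥ ofE x))⁻¹ • ((Aw w) *ᵥ ofE x))

/-- The Rauzy gasket. -/
def gasket : Set E3 :=
  ⋂ n : ℕ, ⋃ w ∈ {w : List (Fin 3) | w.length = n + 1}, fmap w '' simplex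

/-- Falconer's singular value function. -/
def phi (s : ℝ) (g : M3) : ℝ :=
  if s ≤ 1 then (sval2 g / sval1 g) ^ s
  else (sval2 g / sval1 g) * (sval3 g / sval1 g) ^ (s - 1)

/-- The affinity exponent of the Rauzy semigroup. -/
def sA : ℝ :=
  sSup {s : ℝ | s ∈ Set.Ioc (0:ℝ) 2 ∧
    ¬ Summable fun w : {w : List (Fin 3) // w ≠ []} => phi s (Aw w.1)}

/-- A word has its last `k` letters not all the same. -/
def LastNotAllSame (w : List (Fin 3)) (k : ℕ) : Prop :=
  k ≤ w.length ∧ ¬ ∃ c, ∀ x ∈ w.drop (w.length - k), x = c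

/-- A word's last two letters are different. -/
def LastTwoDiff (w : List (Fin 3)) : Prop :=
  ∃ u a b, w = u ++ [a, b] ∧ a ≠ b

/-- The Cartan projection `κ(g) = (log σ₁, log σ₂, log σ₃)`. -/
def kappa (g : M3) : Fin 3 → ℝ :=
  ![Real.log (sval1 g), Real.log (sval2 g), Real.log (sval3 g)]

/-- The linear functional `ψ_s` on the Cartan algebra. -/
def psi (s : ℝ) (lam : Fin 3 → ℝ) : ℝ := (lam 0 - lam 1) + (s - 1) * (lam 0 - lam 2)

end

noncomputable section

/-- The determinant of the pair of edge vectors `(q - p, r - p)`, twice the signed area. -/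
def edgeDet (p q r : EuclideanSpace ℝ (Fin 2)) : ℝ :=
  (q 0 - p 0) * (r 1 - p 1) - (q 1 - p 1) * (r 0 - p 0)

/-- The area of the reference triangle with vertices `0, e₀, e₁`. -/
def refArea : ℝ :=
  (volume (convexHull ℝ {(0 : EuclideanSpace ℝ (Fin 2)), EuclideanSpace.single 0 1,
    EuclideanSpace.single 1 1})).toReal

/-- The linear map sending `e₀, e₁` to `u, w`. -/
def edgeMap (u w : EuclideanSpace ℝ (Fin 2)) :
    EuclideanSpace ℝ (Fin 2) →ₗ[ℝ] EuclideanSpace ℝ (Fin 2) where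
  toFun x := x 0 • u + x 1 • w
  map_add' x y := by simp only [PiLp.add_apply]; module
  map_smul' c x := by simp only [PiLp.smul_apply, smul_eq_mul, RingHom.id_apply]; module

lemma det_edgeMap (u w : EuclideanSpace ℝ (Fin 2)) :
    LinearMap.det (edgeMap u w) = u 0 * w 1 - u 1 * w 0 := by
  rw [← LinearMap.det_toMatrix (EuclideanSpace.basisFun (Fin 2) ℝ).toBasis]
  rw [Matrix.det_fin_two]
  simp [LinearMap.toMatrix_apply, edgeMap]
  ring

lemma volume_convexHull_triple (p q r : EuclideanSpace ℝ (Fin 2)) :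
    (volume (convexHull ℝ {p, q, r})).toReal = |edgeDet p q r| * refArea := by
  have him : convexHull ℝ {p, q, r} = (fun x => p + x) '' (edgeMap (q - p) (r - p) ''
      convexHull ℝ {(0 : EuclideanSpace ℝ (Fin 2)), EuclideanSpace.single 0 1,
        EuclideanSpace.single 1 1}) := by
    rw [LinearMap.image_convexHull]
    have h := AffineMap.image_convexHull
      (AffineEquiv.constVAdd ℝ (EuclideanSpace ℝ (Fin 2)) p).toAffineMap
      (edgeMap (q - p) (r - p) '' {(0 : EuclideanSpace ℝ (Fin 2)), EuclideanSpace.single 0 1,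
        EuclideanSpace.single 1 1})
    have h2 : ⇑(AffineEquiv.constVAdd ℝ (EuclideanSpace ℝ (Fin 2)) p).toAffineMap
        = fun x => p + x := by ext x; simp
    rw [h2] at h
    rw [h]
    congr 1
    simp [Set.image_insert_eq, edgeMap]
  rw [him, Set.image_add_left, measure_preimage_add, Measure.addHaar_image_linearMap, det_edgeMap,
    ENNReal.toReal_mul, ENNReal.toReal_ofReal (abs_nonneg _)]
  simp [edgeDet, refArea]

lemma sq_dist_eq (p q : EuclideanSpace ℝ (Fin 2)) :
    dist p q ^ 2 = (q 0 - p 0) ^ 2 + (q 1 - p 1) ^ 2 := by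
  rw [EuclideanSpace.dist_eq, Real.sq_sqrt (by positivity)]
  simp only [Fin.sum_univ_two, Real.dist_eq, sq_abs]
  ring

/-- If `pq` has length `D` and is at least as long as `pr`, then in the orthonormal frame at `p`
with first axis along `pq` the triangle lies in `[-D, D] × [-h, h]`, where
`h = |edgeDet p q r| / D`. The coordinates here are multiplied by `D`: they are the inner products
of `x - p` with `q - p` and with its rotation by a right angle. -/
lemma mem_box {p q r x : EuclideanSpace ℝ (Fin 2)} {D : ℝ} (hpq : dist p q = D)
    (hpr : dist p r ≤ D) (hx : x ∈ convexHull ℝ {p, q, r}) :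
    |(x 0 - p 0) * (q 0 - p 0) + (x 1 - p 1) * (q 1 - p 1)| ≤ D ^ 2 ∧
      |(x 1 - p 1) * (q 0 - p 0) - (x 0 - p 0) * (q 1 - p 1)| ≤ |edgeDet p q r| := by
  have hD : 0 ≤ D := hpq ▸ dist_nonneg
  have hq : (q 0 - p 0) ^ 2 + (q 1 - p 1) ^ 2 = D ^ 2 := by
    rw [← hpq, sq_dist_eq]
  have hr : (r 0 - p 0) ^ 2 + (r 1 - p 1) ^ 2 ≤ D ^ 2 := by
    rw [← sq_dist_eq]
    exact pow_le_pow_left₀ dist_nonneg hpr 2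
  rw [convexHull_insert (by simp), convexHull_pair] at hx
  simp only [convexJoin_singleton_left, Set.mem_iUnion] at hx
  obtain ⟨y, ⟨a, b, ha, hb, hab, rfl⟩, ⟨c, d, hc, hd, hcd, rfl⟩⟩ := hx
  obtain rfl : a = 1 - b := by linarith
  obtain rfl : c = 1 - d := by linarith
  simp only [PiLp.add_apply, PiLp.smul_apply, smul_eq_mul]
  have hrq : |(r 0 - p 0) * (q 0 - p 0) + (r 1 - p 1) * (q 1 - p 1)| ≤ D ^ 2 := by
    rw [abs_le]
    constructor
    · nlinarith [sq_nonneg (r 0 - p 0 + (q 0 - p 0)), sq_nonneg (r 1 - p 1 + (q 1 - p 1))]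
    · nlinarith [sq_nonneg (r 0 - p 0 - (q 0 - p 0)), sq_nonneg (r 1 - p 1 - (q 1 - p 1))]
  constructor
  · have e : ((1 - d) * p 0 + d * ((1 - b) * q 0 + b * r 0) - p 0) * (q 0 - p 0) +
        ((1 - d) * p 1 + d * ((1 - b) * q 1 + b * r 1) - p 1) * (q 1 - p 1)
        = d * ((1 - b) * D ^ 2 +
          b * ((r 0 - p 0) * (q 0 - p 0) + (r 1 - p 1) * (q 1 - p 1))) := by
      rw [← hq]; ring
    rw [e, abs_mul, abs_of_nonneg hd]
    have h1 := abs_add_le ((1 - b) * D ^ 2)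
      (b * ((r 0 - p 0) * (q 0 - p 0) + (r 1 - p 1) * (q 1 - p 1)))
    rw [abs_mul, abs_mul, abs_of_nonneg ha, abs_of_nonneg hb, abs_of_nonneg (sq_nonneg D)] at h1
    have h2 := mul_le_mul_of_nonneg_left hrq hb
    exact (mul_le_of_le_one_left (abs_nonneg _) (by linarith)).trans (by linarith)
  · have e : ((1 - d) * p 1 + d * ((1 - b) * q 1 + b * r 1) - p 1) * (q 0 - p 0) -
        ((1 - d) * p 0 + d * ((1 - b) * q 0 + b * r 0) - p 0) * (q 1 - p 1)
        = d * b * edgeDet p q r := by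
      unfold edgeDet; ring
    rw [e, abs_mul, abs_of_nonneg (mul_nonneg hd hb)]
    exact mul_le_of_le_one_left (abs_nonneg _) (by nlinarith)

lemma abs_edgeDet_le {p q r : EuclideanSpace ℝ (Fin 2)} {D : ℝ} (hpq : dist p q = D)
    (hpr : dist p r ≤ D) : |edgeDet p q r| ≤ D ^ 2 := by
  have hq : (q 0 - p 0) ^ 2 + (q 1 - p 1) ^ 2 = D ^ 2 := by
    rw [← hpq, sq_dist_eq]
  have hr : (r 0 - p 0) ^ 2 + (r 1 - p 1) ^ 2 ≤ D ^ 2 := by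
    rw [← sq_dist_eq]
    exact pow_le_pow_left₀ dist_nonneg hpr 2
  unfold edgeDet
  rw [abs_le]
  constructor
  · nlinarith [sq_nonneg (q 0 - p 0 + (r 1 - p 1)), sq_nonneg (q 1 - p 1 - (r 0 - p 0))]
  · nlinarith [sq_nonneg (q 0 - p 0 - (r 1 - p 1)), sq_nonneg (q 1 - p 1 + (r 0 - p 0))]

lemma round_mem_Icc {t : ℝ} {N : ℕ} (ht : |t| ≤ N) : round t ∈ Finset.Icc (-(N : ℤ)) N := by
  have h1 := abs_le.1 (abs_sub_round t)
  have h2 := abs_le.1 ht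
  rw [Finset.mem_Icc]
  constructor
  · have : (-(N : ℤ) : ℝ) < (round t : ℝ) + 1 := by push_cast; linarith [h1.1, h1.2, h2.1, h2.2]
    have : -(N : ℤ) < round t + 1 := by exact_mod_cast this
    omega
  · have : (round t : ℝ) < ((N : ℤ) : ℝ) + 1 := by push_cast; linarith [h1.1, h1.2, h2.1, h2.2]
    have : round t < (N : ℤ) + 1 := by exact_mod_cast this
    omega

/-- The grid covering: if `pq` has length `D` and is at least as long as `pr`, and the height of
the triangle over `pq` is `h ≤ D`, then at most `35 * (D / h)` balls of diameter `h` cover it. -/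
lemma exists_cover {p q r : EuclideanSpace ℝ (Fin 2)} {D h : ℝ} (hD : 0 < D) (hh : 0 < h)
    (hhD : h ≤ D) (hpq : dist p q = D) (hpr : dist p r ≤ D) (hdet : |edgeDet p q r| = D * h) :
    ∃ (k : ℕ) (center : Fin k → EuclideanSpace ℝ (Fin 2)),
      convexHull ℝ {p, q, r} ⊆ ⋃ i, Metric.closedBall (center i) (h / 2) ∧
      (k : ℝ) * h ≤ 35 * D := by
  have hq : (q 0 - p 0) ^ 2 + (q 1 - p 1) ^ 2 = D ^ 2 := by
    rw [← hpq, sq_dist_eq]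
  set N : ℕ := ⌈2 * D / h⌉₊ with hN
  let I : Finset (ℤ × ℤ) := Finset.Icc (-(N : ℤ)) N ×ˢ Finset.Icc (-((2 : ℕ) : ℤ)) (2 : ℕ)
  -- The grid point with indices `(i, j)` in the frame `(q - p) / D` and its rotation.
  let g : ℤ × ℤ → EuclideanSpace ℝ (Fin 2) := fun z =>
    !₂[p 0 + h / 2 * (z.1 * ((q 0 - p 0) / D) - z.2 * ((q 1 - p 1) / D)),
      p 1 + h / 2 * (z.1 * ((q 1 - p 1) / D) + z.2 * ((q 0 - p 0) / D))]
  refine ⟨I.card, fun i => g (I.equivFin.symm i).1, ?_, ?_⟩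
  · intro x hx
    obtain ⟨h1, h2⟩ := mem_box hpq hpr hx
    set s := ((x 0 - p 0) * (q 0 - p 0) + (x 1 - p 1) * (q 1 - p 1)) / D with hs
    set t := ((x 1 - p 1) * (q 0 - p 0) - (x 0 - p 0) * (q 1 - p 1)) / D with ht
    have hs' : |2 * s / h| ≤ N := by
      refine le_trans ?_ (Nat.le_ceil _)
      rw [abs_div, abs_mul, abs_of_pos hh, abs_two]
      gcongr
      rw [hs, abs_div, abs_of_pos hD, div_le_iff₀ hD]
      linarith
    have ht' : |2 * t / h| ≤ (2 : ℕ) := by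
      rw [abs_div, abs_mul, abs_of_pos hh, abs_two, div_le_iff₀ hh]
      have : |t| ≤ h := by
        rw [ht, abs_div, abs_of_pos hD, div_le_iff₀ hD]
        linarith
      push_cast; linarith
    have hz : (round (2 * s / h), round (2 * t / h)) ∈ I :=
      Finset.mem_product.2 ⟨round_mem_Icc hs', round_mem_Icc ht'⟩
    rw [Set.mem_iUnion]
    refine ⟨I.equivFin ⟨_, hz⟩, ?_⟩
    beta_reduce
    rw [Equiv.symm_apply_apply, Metric.mem_closedBall, EuclideanSpace.dist_eq]
    apply Real.sqrt_le_iff.2 ⟨by positivity, ?_⟩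
    have hi := abs_le.1 (abs_sub_round (2 * s / h))
    have hj := abs_le.1 (abs_sub_round (2 * t / h))
    set i := (round (2 * s / h) : ℝ) with hi'
    set j := (round (2 * t / h) : ℝ) with hj'
    simp only [Fin.sum_univ_two, Real.dist_eq, sq_abs, g]
    simp only [Matrix.cons_val_zero, Matrix.cons_val_one]
    set u := (q 0 - p 0) / D with hu
    set v := (q 1 - p 1) / D with hv
    have huv : u ^ 2 + v ^ 2 = 1 := by
      rw [hu, hv, div_pow, div_pow, ← add_div, hq, div_self (by positivity)]
    have hsu : s = (x 0 - p 0) * u + (x 1 - p 1) * v := by rw [hs, hu, hv]; ring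
    have htu : t = (x 1 - p 1) * u - (x 0 - p 0) * v := by rw [ht, hu, hv]; ring
    have hx0 : x 0 - p 0 = s * u - t * v := by
      rw [hsu, htu]; linear_combination -(x 0 - p 0) * huv
    have hx1 : x 1 - p 1 = s * v + t * u := by
      rw [hsu, htu]; linear_combination -(x 1 - p 1) * huv
    have hsi : s = h / 2 * (2 * s / h) := by field_simp
    have htj : t = h / 2 * (2 * t / h) := by field_simp
    set S := 2 * s / h
    set T := 2 * t / h
    have e : (x 0 - (p 0 + h / 2 * (i * u - j * v))) ^ 2 +
        (x 1 - (p 1 + h / 2 * (i * v + j * u))) ^ 2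
        = (h / 2) ^ 2 * ((S - i) ^ 2 + (T - j) ^ 2) := by
      have e0 : x 0 - (p 0 + h / 2 * (i * u - j * v)) = h / 2 * ((S - i) * u - (T - j) * v) := by
        linear_combination hx0 + u * hsi - v * htj
      have e1 : x 1 - (p 1 + h / 2 * (i * v + j * u)) = h / 2 * ((S - i) * v + (T - j) * u) := by
        linear_combination hx1 + v * hsi + u * htj
      rw [e0, e1]
      linear_combination (h / 2) ^ 2 * ((S - i) ^ 2 + (T - j) ^ 2) * huv
    rw [e]
    apply mul_le_of_le_one_right (by positivity)
    have := sq_le_sq' hi.1 hi.2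
    have := sq_le_sq' hj.1 hj.2
    linarith
  · have hc : (I.card : ℝ) = (2 * N + 1) * 5 := by
      have : I.card = (2 * N + 1) * 5 := by
        simp only [I, Finset.card_product, Int.card_Icc]
        congr 1
        omega
      rw [this]; push_cast; ring
    have hN' : (N : ℝ) < 2 * D / h + 1 := Nat.ceil_lt_add_one (by positivity)
    have : (N : ℝ) * h ≤ 2 * D + h := by
      calc (N : ℝ) * h ≤ (2 * D / h + 1) * h := by gcongr
        _ = 2 * D + h := by field_simp
    rw [hc]
    linarith

/-- The bound for a triangle whose side `pq` has length `D` and is at least as long as `pr`;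
if `pq` is a longest side, then `D` is the diameter. -/
lemma cover_bound_of_longest {δ : ℝ} (hκ : 0 < refArea) {p q r : EuclideanSpace ℝ (Fin 2)}
    {D : ℝ} (hD : 0 < D) (hpq : dist p q = D) (hpr : dist p r ≤ D)
    (hvol : 0 < (volume (convexHull ℝ {p, q, r})).toReal) :
    ∃ (k : ℕ) (center : Fin k → EuclideanSpace ℝ (Fin 2)) (rad : Fin k → ℝ),
      (∀ i, 0 ≤ rad i) ∧
      convexHull ℝ {p, q, r} ⊆ ⋃ i, Metric.closedBall (center i) (rad i) ∧
      (∀ i, 2 * rad i ≤ D) ∧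
      ∑ i, (2 * rad i) ^ (1 + δ) ≤ 35 / refArea ^ δ * D ^ (1 - δ) *
        (volume (convexHull ℝ {p, q, r})).toReal ^ δ := by
  rw [volume_convexHull_triple] at hvol ⊢
  have hdet : 0 < |edgeDet p q r| := pos_of_mul_pos_left hvol hκ.le
  obtain ⟨h, hh⟩ : ∃ h, |edgeDet p q r| = D * h := ⟨|edgeDet p q r| / D, by field_simp⟩
  have hpos : 0 < h := pos_of_mul_pos_right (hh ▸ hdet) hD.le
  have hhD : h ≤ D := by
    have := abs_edgeDet_le hpq hpr
    rw [hh, sq] at this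
    exact le_of_mul_le_mul_left this hD
  obtain ⟨k, center, hcov, hk⟩ := exists_cover hD hpos hhD hpq hpr hh
  refine ⟨k, center, fun _ => h / 2, fun _ => by positivity, hcov, fun _ => by linarith, ?_⟩
  have h2 : 2 * (h / 2) = h := by ring
  rw [hh, Real.mul_rpow (by positivity) hκ.le, Real.mul_rpow hD.le hpos.le]
  simp only [h2, Finset.sum_const, Finset.card_univ, Fintype.card_fin, nsmul_eq_mul]
  have hκδ : 0 < refArea ^ δ := Real.rpow_pos_of_pos hκ δ
  have hDδ : D ^ (1 - δ) * D ^ δ = D := by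
    rw [← Real.rpow_add hD, sub_add_cancel, Real.rpow_one]
  calc (k : ℝ) * h ^ (1 + δ) = k * h * h ^ δ := by rw [Real.rpow_add hpos, Real.rpow_one]; ring
    _ ≤ 35 * D * h ^ δ := by gcongr
    _ = 35 * (D ^ (1 - δ) * D ^ δ) * h ^ δ := by rw [hDδ]
    _ = _ := by field_simp

end

/-- Any plane triangle of diameter `D` and area `A` can be covered by balls of diameter
at most `D` with `Σ diamᵢ^(1+δ) ≤ c_δ D^(1−δ) A^δ`. -/
theorem triangle_cover_bound (δ : ℝ) (hδ : 0 < δ) :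
    ∃ c > (0:ℝ), ∀ p q r : EuclideanSpace ℝ (Fin 2),
      0 < Metric.diam (convexHull ℝ {p, q, r}) →
      0 < (volume (convexHull ℝ {p, q, r})).toReal →
      ∃ (k : ℕ) (center : Fin k → EuclideanSpace ℝ (Fin 2)) (rad : Fin k → ℝ),
        (∀ i, 0 ≤ rad i) ∧
        convexHull ℝ {p, q, r} ⊆ ⋃ i, Metric.closedBall (center i) (rad i) ∧
        (∀ i, 2 * rad i ≤ Metric.diam (convexHull ℝ {p, q, r})) ∧
        ∑ i, (2 * rad i) ^ (1 + δ) ≤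
          c * Metric.diam (convexHull ℝ {p, q, r}) ^ (1 - δ) *
            (volume (convexHull ℝ {p, q, r})).toReal ^ δ := by
  rcases (show 0 ≤ refArea from ENNReal.toReal_nonneg).eq_or_lt with hκ | hκ
  · -- Vacuous: all triangles would have zero area.
    refine ⟨1, one_pos, fun p q r _ hvol => ?_⟩
    rw [volume_convexHull_triple, ← hκ, mul_zero] at hvol
    exact absurd hvol (lt_irrefl _)
  refine ⟨35 / refArea ^ δ, by have := Real.rpow_pos_of_pos hκ δ; positivity,
    fun p q r hD hvol => ?_⟩
  have hdiam : Metric.diam (convexHull ℝ {p, q, r}) =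
      max (max (dist p q) (dist p r)) (dist q r) := by
    rw [convexHull_diam, Metric.diam_triple]
  obtain ⟨hpq, hpr, hqr⟩ : dist p q ≤ Metric.diam (convexHull ℝ {p, q, r}) ∧
      dist p r ≤ Metric.diam (convexHull ℝ {p, q, r}) ∧
      dist q r ≤ Metric.diam (convexHull ℝ {p, q, r}) := by
    rw [hdiam]; simp
  have hcases : dist p q = Metric.diam (convexHull ℝ {p, q, r}) ∨
      dist p r = Metric.diam (convexHull ℝ {p, q, r}) ∨
      dist q r = Metric.diam (convexHull ℝ {p, q, r}) := by
    rw [hdiam]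
    rcases max_choice (max (dist p q) (dist p r)) (dist q r) with h | h
    · rcases max_choice (dist p q) (dist p r) with h' | h' <;> rw [h, h'] <;> simp
    · rw [h]; simp
  -- Relabel the vertices so that the first two span a longest side.
  rcases hcases with h | h | h
  · exact cover_bound_of_longest hκ hD h hpr hvol
  · rw [show ({p, q, r} : Set (EuclideanSpace ℝ (Fin 2))) = {p, r, q} by
      rw [Set.pair_comm]] at *
    exact cover_bound_of_longest hκ hD h hpq hvol
  · rw [show ({p, q, r} : Set (EuclideanSpace ℝ (Fin 2))) = {q, r, p} by
      rw [Set.insert_comm, Set.pair_comm p r]] at *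
    exact cover_bound_of_longest hκ hD h (by rwa [dist_comm]) hvol
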